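/- Let f : ℝ^d → ℝ be differentiable with a global minimizer x_* (so ∇f(x_*) = 0 and f(x_*) ≤ f(x) for all x). Let x_0 ∈ ℝ^d and define silver step-size gradient descent iterates x_{i+1} = x_i − η_i·∇f(x_i). Fix k ≥ 1 and n = 2^k − 1, and let Q(u, v) := 2(f(u) − f(v)) − 2⟨∇f(v), u − v⟩ − ‖∇f(u) − ∇f(v)‖² and A_n := (1/(4r_k²))‖∇f(x_n)‖² + (1/r_k)⟨∇f(x_n), x_* − x_n⟩ + Σ_{i=0}^{n−1} η_i²‖∇f(x_i)‖² + 2Σ_{i=0}^{n−1} η_i⟨∇f(x_i), x_* − x_i⟩. Then there exist non-negative reals λ_{ij}, indexed by i, j ranging over the points x_0, …, x_n, x_*, such that Σ_{i,j} λ_{ij}·Q(x_i, x_j) ≤ (1/r_k)(f(x_*) − f(x_n)) − A_n. -/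

import Mathlib

/-!
Write `P = ρ ^ k`, `n = 2 ^ k - 1`, `h i` for the silver steps, `F i`, `g i` for the values and
gradients along the trajectory, and `Q i j` for the co-coercivity gap of the points `i` and `j`.
The multipliers are allowed to depend on `f`. If some `Q i j` is negative, a single large multiplier
suffices, so the content is that the right-hand side is nonnegative as soon as all gaps are; it
is derived as a nonnegative combination of gaps.

The core is an inequality not involving the minimizer (`silver_descent`):
`2 ∑ h i (F i - F n) ≥ ∑ h i (h i - 1) ‖g i‖² + (P² - P) ‖g n‖²`, with sums over `i < n`.
It is proved by induction on `k`. The schedule of length `2 n + 1` consists of the schedule of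
length `n`, a step `1 + P / ρ`, and again the schedule of length `n`. With `m = 2 n + 1`, adding
* the inequality for the first half,
* `1 + 2 ρ` times the inequality for the second half,
* `ρ ∑ h i Q n i` and `ρ ∑ h i Q m i`, the sums running over the second half,
* `ρ Q n m` and `P Q m n`

gives exactly the inequality for `k + 1`, because `ρ² = 2 ρ + 1`. The sums `∑ h i Q z i` with a
fixed reference point `z` are computed by telescoping `‖x i - z‖²` (`sum_gap_eq`).

Finally, with `R = 1 / r_k`, so that `R² - 2 R = 4 P² - 4`, adding `∑ h i Q * i`, `(R / 2) Q * n`,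
`(P - 1) Q n *` and the core inequality gives the claim.
-/

open scoped InnerProductSpace

/-- The silver ratio `ρ = 1 + √2`. -/
noncomputable def silverRho : ℝ := 1 + Real.sqrt 2

/-- The silver step-size schedule `η_i = 1 + ρ^(ν₂(i+1) - 1)`. -/
noncomputable def silverStep (i : ℕ) : ℝ :=
  1 + silverRho ^ ((padicValNat 2 (i + 1) : ℤ) - 1)

/-- The silver rate `r_k = (1 + √(4 ρ^(2k) - 3))⁻¹`. -/
noncomputable def silverRate (k : ℕ) : ℝ :=
  (1 + Real.sqrt (4 * silverRho ^ (2 * k) - 3))⁻¹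

lemma silverRho_sq : silverRho ^ 2 = 2 * silverRho + 1 := by
  have := Real.sq_sqrt (show (0 : ℝ) ≤ 2 by norm_num)
  unfold silverRho
  linear_combination this

lemma one_le_silverRho : 1 ≤ silverRho := by
  unfold silverRho
  linarith [Real.sqrt_nonneg 2]

lemma silverStep_nonneg (i : ℕ) : 0 ≤ silverStep i := by
  have : 0 < silverRho := lt_of_lt_of_le one_pos one_le_silverRho
  unfold silverStep
  positivity

lemma silverStep_mid {k n : ℕ} (hn : n + 1 = 2 ^ k) :
    silverStep n = 1 + silverRho ^ k / silverRho := by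
  have : silverRho ≠ 0 := (lt_of_lt_of_le one_pos one_le_silverRho).ne'
  rw [silverStep, hn, padicValNat.prime_pow, zpow_sub_one₀ this, zpow_natCast, div_eq_mul_inv]

/-- The second half of the schedule repeats the first: `ν₂ (2 ^ k + j) = ν₂ j` for `0 < j < 2 ^ k`. -/
lemma silverStep_shift {k n i : ℕ} (hn : n + 1 = 2 ^ k) (hi : i < n) :
    silverStep (n + 1 + i) = silverStep i := by
  have key : padicValNat 2 (n + 1 + i + 1) = padicValNat 2 (i + 1) := by
    have hdvd : ∀ j, 2 ^ j ∣ n + 1 + i + 1 ↔ 2 ^ j ∣ i + 1 := by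
      intro j
      rw [show n + 1 + i + 1 = 2 ^ k + (i + 1) by omega]
      rcases le_or_gt j k with hj | hj
      · exact (Nat.dvd_add_right (pow_dvd_pow 2 hj))
      · have h1 : 2 ^ (k + 1) ≤ 2 ^ j := Nat.pow_le_pow_right (by norm_num) hj
        rw [pow_succ] at h1
        constructor <;> intro h <;> have := Nat.le_of_dvd (by omega) h <;> omega
    apply le_antisymm
    · rw [← padicValNat_dvd_iff_le (by omega), ← hdvd]
      exact pow_padicValNat_dvd
    · rw [← padicValNat_dvd_iff_le (by omega), hdvd]
      exact pow_padicValNat_dvd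
  rw [silverStep, silverStep, key]

lemma sum_silverStep (k : ℕ) : ∀ n, n + 1 = 2 ^ k →
    ∑ i ∈ Finset.range n, silverStep i = silverRho ^ k - 1 := by
  induction k with
  | zero =>
    intro n hn
    obtain rfl : n = 0 := by simpa using hn
    simp
  | succ k ih =>
    intro m hm
    obtain ⟨n, hn⟩ : ∃ n, n + 1 = 2 ^ k := ⟨2 ^ k - 1, Nat.sub_add_cancel Nat.one_le_two_pow⟩
    obtain rfl : m = n + 1 + n := by rw [pow_succ] at hm; omega
    have hρ : silverRho ≠ 0 := (lt_of_lt_of_le one_pos one_le_silverRho).ne'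
    rw [Finset.sum_range_add, Finset.sum_range_succ,
      Finset.sum_congr rfl fun i hi => silverStep_shift hn (Finset.mem_range.1 hi),
      ih n hn, silverStep_mid hn]
    field_simp
    linear_combination (-silverRho ^ k) * silverRho_sq

section

variable {V : Type*} [NormedAddCommGroup V] [InnerProductSpace ℝ V]

/-- The co-coercivity gap `Q(u, v)` of two points `u`, `v` carrying function values `fu`, `fv` and
gradients `gu`, `gv`. -/
noncomputable def gap (fu fv : ℝ) (gu gv u v : V) : ℝ :=
  2 * (fu - fv) - 2 * ⟪gv, u - v⟫_ℝ - ‖gu - gv‖ ^ 2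

/-- Step-size weighted gaps between a fixed reference point `z` and gradient descent iterates, with
the inner products evaluated by telescoping `‖x i - z‖²`. -/
lemma sum_gap_eq (h F : ℕ → ℝ) (g x : ℕ → V) (fz : ℝ) (gz z : V) (n : ℕ)
    (hx : ∀ i < n, x (i + 1) = x i - h i • g i) :
    ∑ i ∈ Finset.range n, h i * gap fz (F i) gz (g i) z (x i) =
      2 * ∑ i ∈ Finset.range n, h i * (fz - F i)
        + ∑ i ∈ Finset.range n, h i * (h i - 1) * ‖g i‖ ^ 2
        + ‖x 0 - z‖ ^ 2 - ‖x n - z‖ ^ 2 + 2 * ⟪x 0 - x n, gz⟫_ℝ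
        - (∑ i ∈ Finset.range n, h i) * ‖gz‖ ^ 2 := by
  induction n with
  | zero => simp
  | succ n ih =>
    have e1 : ‖x (n + 1) - z‖ ^ 2 = ‖x n - z‖ ^ 2 + 2 * h n * ⟪g n, z - x n⟫_ℝ
        + h n ^ 2 * ‖g n‖ ^ 2 := by
      rw [hx n (by omega), show x n - h n • g n - z = (x n - z) - h n • g n by abel,
        norm_sub_sq_real, inner_smul_right, norm_smul, mul_pow, Real.norm_eq_abs, sq_abs,
        ← neg_sub (x n) z, inner_neg_right, real_inner_comm]
      ring
    have e2 : ⟪x 0 - x (n + 1), gz⟫_ℝ = ⟪x 0 - x n, gz⟫_ℝ + h n * ⟪gz, g n⟫_ℝ := by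
      rw [hx n (by omega), show x 0 - (x n - h n • g n) = (x 0 - x n) + h n • g n by abel,
        inner_add_left, real_inner_smul_left, real_inner_comm (g n) gz]
    rw [Finset.sum_range_succ, ih fun i hi => hx i (by omega)]
    simp only [Finset.sum_range_succ, e1, e2, gap, norm_sub_sq_real gz]
    ring

/-- Descent along the silver schedule, with no reference to a minimizer. -/
theorem silver_descent (k : ℕ) : ∀ (n : ℕ) (F : ℕ → ℝ) (g x : ℕ → V), n + 1 = 2 ^ k →
    (∀ i < n, x (i + 1) = x i - silverStep i • g i) →
    (∀ i ≤ n, ∀ j ≤ n, 0 ≤ gap (F i) (F j) (g i) (g j) (x i) (x j)) →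
    ∑ i ∈ Finset.range n, silverStep i * (silverStep i - 1) * ‖g i‖ ^ 2
        + ((silverRho ^ k) ^ 2 - silverRho ^ k) * ‖g n‖ ^ 2
      ≤ 2 * ∑ i ∈ Finset.range n, silverStep i * (F i - F n) := by
  induction k with
  | zero =>
    intro n F g x hn _ _
    obtain rfl : n = 0 := by simpa using hn
    simp
  | succ k ih =>
    intro m F g x hm hx hQ
    obtain ⟨n, hn⟩ : ∃ n, n + 1 = 2 ^ k := ⟨2 ^ k - 1, Nat.sub_add_cancel Nat.one_le_two_pow⟩
    obtain rfl : m = n + 1 + n := by rw [pow_succ] at hm; omega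
    have hρ1 := one_le_silverRho
    have hρ2 := silverRho_sq
    have hsh : ∀ i ∈ Finset.range n, silverStep (n + 1 + i) = silverStep i :=
      fun i hi => silverStep_shift hn (Finset.mem_range.1 hi)
    have hx' : ∀ i < n, x (n + 1 + (i + 1)) = x (n + 1 + i) - silverStep i • g (n + 1 + i) := by
      intro i hi
      rw [← silverStep_shift hn hi, ← hx (n + 1 + i) (by omega)]
      rfl
    have E1 := ih n F g x hn (fun i hi => hx i (by omega))
      (fun i hi j hj => hQ i (by omega) j (by omega))
    have E2 := ih n (fun i => F (n + 1 + i)) (fun i => g (n + 1 + i)) (fun i => x (n + 1 + i)) hn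
      hx' (fun i hi j hj => hQ _ (by omega) _ (by omega))
    have B : ∀ j ≤ n + 1 + n, 0 ≤ ∑ i ∈ Finset.range n, silverStep i *
        gap (F j) (F (n + 1 + i)) (g j) (g (n + 1 + i)) (x j) (x (n + 1 + i)) := fun j hj =>
      Finset.sum_nonneg fun i hi => mul_nonneg (silverStep_nonneg i)
        (hQ _ hj _ (by have := Finset.mem_range.1 hi; omega))
    have B1 := B n (by omega)
    have B2 := B (n + 1 + n) le_rfl
    rw [sum_gap_eq silverStep (fun i => F (n + 1 + i)) (fun i => g (n + 1 + i))
      (fun i => x (n + 1 + i)) _ _ _ n hx', sum_silverStep k n hn] at B1 B2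
    have C1 := hQ n (by omega) (n + 1 + n) le_rfl
    have C2 := hQ (n + 1 + n) le_rfl n (by omega)
    have hmid := silverStep_mid hn
    have hxn := hx n (by omega)
    simp only [Finset.sum_range_add, Finset.sum_range_succ, add_zero] at E1 E2 B1 B2 ⊢
    have hs1 : ∑ i ∈ Finset.range n,
          silverStep (n + 1 + i) * (silverStep (n + 1 + i) - 1) * ‖g (n + 1 + i)‖ ^ 2 =
        ∑ i ∈ Finset.range n, silverStep i * (silverStep i - 1) * ‖g (n + 1 + i)‖ ^ 2 :=
      Finset.sum_congr rfl fun i hi => by rw [hsh i hi]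
    have hs2 : ∑ i ∈ Finset.range n, silverStep (n + 1 + i) * (F (n + 1 + i) - F (n + 1 + n)) =
        ∑ i ∈ Finset.range n, silverStep i * (F (n + 1 + i) - F (n + 1 + n)) :=
      Finset.sum_congr rfl fun i hi => by rw [hsh i hi]
    rw [hs1, hs2, hmid, pow_succ silverRho]
    rw [hmid] at hxn
    -- With `q = ρ ^ k / ρ` every coefficient is a polynomial in `ρ` and `q`.
    obtain ⟨q, hq⟩ : ∃ q, q = silverRho ^ k / silverRho := ⟨_, rfl⟩
    have hP : silverRho ^ k = silverRho * q := by rw [hq]; field_simp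
    have hq0 : 0 ≤ q := by rw [hq]; positivity
    rw [← hq] at hxn ⊢
    rw [hP] at E1 E2 B1 B2 ⊢
    have hS : ∀ (G : ℕ → ℝ) (c : ℝ), ∑ i ∈ Finset.range n, silverStep i * (G i - c) =
        ∑ i ∈ Finset.range n, silverStep i * G i - (silverRho * q - 1) * c := by
      intro G c
      rw [← hP, ← sum_silverStep k n hn, Finset.sum_mul, ← Finset.sum_sub_distrib]
      exact Finset.sum_congr rfl fun i _ => by ring
    have hS' : ∀ (G : ℕ → ℝ) (c : ℝ), ∑ i ∈ Finset.range n, silverStep i * (c - G i) =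
        (silverRho * q - 1) * c - ∑ i ∈ Finset.range n, silverStep i * G i := by
      intro G c
      rw [← neg_sub (∑ i ∈ Finset.range n, silverStep i * G i), ← hS, ← Finset.sum_neg_distrib]
      exact Finset.sum_congr rfl fun i _ => by ring
    have v1 : ‖x (n + 1) - x n‖ ^ 2 = (1 + q) ^ 2 * ‖g n‖ ^ 2 := by
      rw [hxn, sub_sub_cancel_left, norm_neg, norm_smul, mul_pow, Real.norm_eq_abs, sq_abs]
    obtain ⟨u, hu⟩ : ∃ u, u = x n - x (n + 1 + n) := ⟨_, rfl⟩
    have v2 : x (n + 1) - x (n + 1 + n) = u - (1 + q) • g n := by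
      rw [hxn, hu]; abel
    have v3 : x (n + 1 + n) - x n = -u := by rw [hu, neg_sub]
    simp only [gap, hS, hS', v1, v2, v3, ← hu, norm_neg, inner_neg_right, sub_self, norm_zero,
      norm_sub_sq_real, inner_sub_left, real_inner_smul_left, inner_smul_right,
      real_inner_comm (g n) u, real_inner_comm (g (n + 1 + n)) u,
      real_inner_comm (g n) (g (n + 1 + n)), norm_smul, mul_pow, Real.norm_eq_abs, sq_abs,
      real_inner_self_eq_norm_sq] at B1 B2 C1 C2 E1 E2 ⊢
    have hρ0 : 0 ≤ silverRho := by linarith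
    linear_combination E1 + (1 + 2 * silverRho) * E2 + silverRho * B1 + silverRho * B2
      + silverRho * C1 + silverRho * q * C2
      + (silverRho ^ 2 * q ^ 2 * ‖g (n + 1 + n)‖ ^ 2 - (q ^ 2 + q) * ‖g n‖ ^ 2
        + 2 * q * (F n - F (n + 1 + n))) * hρ2

end


/-- Euclidean instance of Lemma 5.2: for silver step-size gradient descent iterates and
`n = 2^k - 1`, there exist non-negative multipliers `λ_{ij}` (indexed by the points
`x_0, …, x_n, x_*`, encoded as `Fin (n + 2)` with the last index standing for `x_*`)
such that `Σ λ_{ij} Q(x_i, x_j) ≤ (1/r_k)(f(x_*) - f(x_n)) - A_n`. -/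
theorem silver_certificate_exists {d : ℕ}
    (f : EuclideanSpace ℝ (Fin d) → ℝ) (hdiff : Differentiable ℝ f)
    (xstar : EuclideanSpace ℝ (Fin d)) (hstar : gradient f xstar = 0)
    (hmin : ∀ y, f xstar ≤ f y)
    (x : ℕ → EuclideanSpace ℝ (Fin d))
    (hiter : ∀ i, x (i + 1) = x i - silverStep i • gradient f (x i))
    (k : ℕ) (hk : 1 ≤ k) :
    let n := 2 ^ k - 1
    let Q : EuclideanSpace ℝ (Fin d) → EuclideanSpace ℝ (Fin d) → ℝ := fun u v =>
      2 * (f u - f v) - 2 * ⟪gradient f v, u - v⟫_ℝ - ‖gradient f u - gradient f v‖ ^ 2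
    let A : ℝ :=
      1 / (4 * silverRate k ^ 2) * ‖gradient f (x n)‖ ^ 2
        + 1 / silverRate k * ⟪gradient f (x n), xstar - x n⟫_ℝ
        + ∑ i ∈ Finset.range n, silverStep i ^ 2 * ‖gradient f (x i)‖ ^ 2
        + 2 * ∑ i ∈ Finset.range n, silverStep i * ⟪gradient f (x i), xstar - x i⟫_ℝ
    let p : Fin (n + 2) → EuclideanSpace ℝ (Fin d) := fun i =>
      if (i : ℕ) ≤ n then x i else xstar
    ∃ lam : Fin (n + 2) → Fin (n + 2) → ℝ,
      (∀ i j, 0 ≤ lam i j) ∧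
      ∑ i : Fin (n + 2), ∑ j : Fin (n + 2), lam i j * Q (p i) (p j)
        ≤ 1 / silverRate k * (f xstar - f (x n)) - A := by
  intro n Q A p
  by_cases hneg : ∃ a b, Q (p a) (p b) < 0
  · obtain ⟨a, b, hab⟩ := hneg
    set R := 1 / silverRate k * (f xstar - f (x n)) - A
    refine ⟨fun i j => if i = a ∧ j = b then |R| / (-Q (p a) (p b)) else 0, ?_, ?_⟩
    · intro i j
      dsimp only
      split_ifs
      · exact div_nonneg (abs_nonneg _) (by linarith)
      · exact le_rfl
    · have : ∑ i : Fin (n + 2), ∑ j : Fin (n + 2),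
          (if i = a ∧ j = b then |R| / (-Q (p a) (p b)) else 0) * Q (p i) (p j) = -|R| := by
        rw [Finset.sum_eq_single a (fun i _ hi => by simp [hi]) (by simp),
          Finset.sum_eq_single b (fun j _ hj => by simp [hj]) (by simp)]
        simp only [and_self, if_true]
        field_simp [hab.ne]
      rw [this]
      exact neg_abs_le R
  · push Not at hneg
    refine ⟨fun _ _ => 0, fun _ _ => le_rfl, ?_⟩
    simp only [zero_mul, Finset.sum_const_zero]
    have hn : n + 1 = 2 ^ k := Nat.sub_add_cancel Nat.one_le_two_pow
    have hp : ∀ i (hi : i ≤ n), p ⟨i, by omega⟩ = x i := fun i hi => if_pos hi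
    have hps : p (Fin.last (n + 1)) = xstar := if_neg (by simp)
    have hxx : ∀ i ≤ n, ∀ j ≤ n, 0 ≤ Q (x i) (x j) := fun i hi j hj => by
      rw [← hp i hi, ← hp j hj]; exact hneg _ _
    have hsx : ∀ i ≤ n, 0 ≤ Q xstar (x i) := fun i hi => by
      rw [← hp i hi, ← hps]; exact hneg _ _
    have hxs : 0 ≤ Q (x n) xstar := by
      rw [← hp n le_rfl, ← hps]; exact hneg _ _
    have D := silver_descent k n (fun i => f (x i)) (fun i => gradient f (x i)) x hn
      (fun i _ => hiter i) hxx
    have hsn := hsx n le_rfl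
    have B : 0 ≤ ∑ i ∈ Finset.range n, silverStep i * Q xstar (x i) :=
      Finset.sum_nonneg fun i hi => mul_nonneg (silverStep_nonneg i)
        (hsx i (Finset.mem_range.1 hi).le)
    have hP1 : 1 ≤ silverRho ^ k := one_le_pow₀ one_le_silverRho
    have hsum := sum_silverStep k n hn
    -- `R = 1 / r_k` enters only through `R ≥ 0` and `R² - 2 R = 4 ρ ^ (2 k) - 4`.
    obtain ⟨R, hR⟩ : ∃ R, R = 1 + Real.sqrt (4 * silverRho ^ (2 * k) - 3) := ⟨_, rfl⟩
    have hR0 : 0 ≤ R := by rw [hR]; positivity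
    have hR2 : R ^ 2 = 2 * R + 4 * (silverRho ^ k) ^ 2 - 4 := by
      have h1 : (1 : ℝ) ≤ silverRho ^ (2 * k) := one_le_pow₀ one_le_silverRho
      have h2 := Real.sq_sqrt (show 0 ≤ 4 * silverRho ^ (2 * k) - 3 by linarith)
      rw [hR, ← pow_mul, mul_comm k 2]
      linear_combination h2
    have hr1 : 1 / silverRate k = R := by rw [silverRate, hR, one_div, inv_inv]
    have hr2 : 1 / (4 * silverRate k ^ 2) = R ^ 2 / 4 := by
      rw [← hr1]; ring
    simp only [Q, hstar, zero_sub, sub_zero, norm_neg, inner_zero_left, mul_zero] at hsn hxs B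
    have B' : ∑ i ∈ Finset.range n, silverStep i *
          (2 * (f xstar - f (x i)) - 2 * ⟪gradient f (x i), xstar - x i⟫_ℝ
            - ‖gradient f (x i)‖ ^ 2) =
        -2 * ∑ i ∈ Finset.range n, silverStep i * (f (x i) - f (x n))
          - 2 * (∑ i ∈ Finset.range n, silverStep i) * (f (x n) - f xstar)
          - 2 * ∑ i ∈ Finset.range n, silverStep i * ⟪gradient f (x i), xstar - x i⟫_ℝ
          + ∑ i ∈ Finset.range n, silverStep i * (silverStep i - 1) * ‖gradient f (x i)‖ ^ 2
          - ∑ i ∈ Finset.range n, silverStep i ^ 2 * ‖gradient f (x i)‖ ^ 2 := by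
      simp only [Finset.mul_sum, Finset.sum_mul, ← Finset.sum_add_distrib,
        ← Finset.sum_sub_distrib]
      exact Finset.sum_congr rfl fun i _ => by ring
    rw [B', hsum] at B
    simp only [A, hr1, hr2]
    have m1 := mul_nonneg hR0 hsn
    have m2 := mul_nonneg (sub_nonneg.2 hP1) hxs
    linear_combination B + D + m1 / 2 + m2 + ‖gradient f (x n)‖ ^ 2 / 4 * hR2
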